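/- Suppose H = V W^H and H^< = V Λ W^H where V ∈ ℂ^{m×p}, W ∈ ℂ^{m×p} both have rank p and Λ ∈ ℂ^{p×p}. Then every eigenvalue of Λ is an eigenvalue of the matrix pencil (H^<, H), i.e. for each eigenvalue λ of Λ there exists a nonzero vector x with H^< x = λ H x. -/

import Mathlib

open Matrix

open scoped ComplexOrder in
theorem conjTranspose_mulVec_surjective_of_rank_eq {m p : ℕ} {W : Matrix (Fin m) (Fin p) ℂ}
    (hW : W.rank = p) : Function.Surjective (Wᴴ *ᵥ ·) := by
  have h : LinearMap.range Wᴴ.mulVecLin = ⊤ := by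
    apply Submodule.eq_top_of_finrank_eq
    rw [Module.finrank_fin_fun]
    exact W.rank_conjTranspose.trans hW
  exact LinearMap.range_eq_top.mp h

theorem pencil_contains_eigenvalues (m p : ℕ) (hp : 0 < p) (hpm : p ≤ m)
    (V W : Matrix (Fin m) (Fin p) ℂ) (hV : V.rank = p) (hW : W.rank = p)
    (Λ : Matrix (Fin p) (Fin p) ℂ) (lam : ℂ)
    (hlam : ∃ y : Fin p → ℂ, y ≠ 0 ∧ Λ *ᵥ y = lam • y) :
    ∃ x : Fin m → ℂ, x ≠ 0 ∧ (V * Λ * Wᴴ) *ᵥ x = lam • ((V * Wᴴ) *ᵥ x) := by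
  obtain ⟨y, hy, hΛ⟩ := hlam
  obtain ⟨x, rfl⟩ := conjTranspose_mulVec_surjective_of_rank_eq hW y
  refine ⟨x, ?_, ?_⟩
  · rintro rfl
    exact hy (mulVec_zero _)
  · simp only [← mulVec_mulVec]
    rw [hΛ, mulVec_smul]
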